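/- Under the hypotheses listed in the context, suppose in addition there exist λ̲ > 0 with λ̲ ≤ λ_k ≤ 1 for all k, γ̲ > 0 with γ_k ≥ γ̲ for all k, and ε ∈ (0, 2β − μγ̲) with γ_k ≤ (2β − ε)/μ for all k. Then for every x* ∈ Ω, the series ∑_k ‖B x_k − B x*‖² converges (is finite). -/

import Mathlib

open RealInnerProductSpace Filter

/-!
Write `‖z‖²_V = ⟪V z, z⟫`. In the metric of `V k = (U k)⁻¹` the resolvent `J k` is nonexpansive, and
by cocoercivity a forward step decreases the squared distance to a zero `z` of `A + B` by
`γ (2β - γμ) ‖B x - B z‖²`. The errors `a k`, `b k` displace the exact relaxed iterate by a vector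
of length at most some summable `E k` in this metric, and passing from `V k` to `V (k + 1)` costs a
factor `1 + η k`. Altogether
`‖x (k+1) - z‖²_{V (k+1)} ≤ exp (η k + E k) * (‖x k - z‖²_{V k} + E k - d k)`,
where `d k` is bounded below by a positive multiple of `‖B (x k) - B z‖²`. Dividing by
`exp (∑ i < k, (η i + E i))` makes this telescope.
-/

theorem summable_of_le_exp_mul {Q d e f : ℕ → ℝ} (hQ : ∀ k, 0 ≤ Q k) (hd : ∀ k, 0 ≤ d k)
    (he_nonneg : ∀ k, 0 ≤ e k) (he : Summable e) (hf_nonneg : ∀ k, 0 ≤ f k) (hf : Summable f)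
    (h : ∀ k, Q (k + 1) ≤ Real.exp (e k) * (Q k + f k - d k)) : Summable d := by
  let S : ℕ → ℝ := fun k => ∑ i ∈ Finset.range k, e i
  have telescoped (k : ℕ) : Real.exp (-S k) * Q k + ∑ i ∈ Finset.range k, Real.exp (-S i) * d i ≤
      Q 0 + ∑ i ∈ Finset.range k, f i := by
    induction k with
    | zero => simp [S]
    | succ k ih =>
      have hS : Real.exp (-S (k + 1)) * Real.exp (e k) = Real.exp (-S k) := by
        rw [← Real.exp_add]
        simp [S, Finset.sum_range_succ]
      have discounted_step : Real.exp (-S (k + 1)) * Q (k + 1) ≤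
          Real.exp (-S k) * (Q k + f k - d k) := by
        rw [← hS, mul_assoc]
        gcongr
        exact h k
      have discounted_error : Real.exp (-S k) * f k ≤ f k :=
        mul_le_of_le_one_left (hf_nonneg k) <| Real.exp_le_one_iff.2 <|
          neg_nonpos.2 <| Finset.sum_nonneg fun i _ => he_nonneg i
      rw [Finset.sum_range_succ, Finset.sum_range_succ]
      linarith
  have discounted_summable : Summable fun k => Real.exp (-S k) * d k := by
    refine summable_of_sum_range_le (c := Q 0 + ∑' i, f i)
      (fun k => mul_nonneg (Real.exp_pos _).le (hd k)) fun k => ?_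
    have := mul_nonneg (Real.exp_pos (-S k)).le (hQ k)
    linarith [telescoped k, hf.sum_le_tsum (Finset.range k) fun i _ => hf_nonneg i]
  refine (discounted_summable.mul_left (Real.exp (∑' i, e i))).of_nonneg_of_le hd fun k => ?_
  rw [← mul_assoc, ← Real.exp_add]
  refine le_mul_of_one_le_left (hd k) (Real.one_le_exp ?_)
  linarith [he.sum_le_tsum (Finset.range k) fun i _ => he_nonneg i]

section StepError

variable {H : Type*} [NormedAddCommGroup H]

/-- A bound, in the metric of the inverse preconditioner, on how far the errors `a` and `b` displace
a forward-backward iterate with step size `γ` and relaxation parameter `t`: the squared length of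
`a` is at most `α⁻¹ ‖a‖²`, that of the effect of `b` at most `γ² μ ‖b‖²`. -/
noncomputable def stepError (α μ γ t : ℝ) (a b : H) : ℝ :=
  √(2 * (γ ^ 2 * μ + α⁻¹)) * (t * ‖a‖ + t * ‖b‖)

theorem stepError_nonneg (α μ γ : ℝ) {t : ℝ} (ht : 0 ≤ t) (a b : H) :
    0 ≤ stepError α μ γ t a b := by
  unfold stepError
  positivity

theorem summable_stepError {α μ : ℝ} (hμ : 0 ≤ μ) {γ t : ℕ → ℝ} {G : ℝ} (hγ_nonneg : ∀ k, 0 ≤ γ k)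
    (hγ_le : ∀ k, γ k ≤ G) (ht : ∀ k, 0 ≤ t k) {a b : ℕ → H}
    (ha : Summable fun k => t k * ‖a k‖) (hb : Summable fun k => t k * ‖b k‖) :
    Summable fun k => stepError α μ (γ k) (t k) (a k) (b k) := by
  refine ((ha.add hb).mul_left √(2 * (G ^ 2 * μ + α⁻¹))).of_nonneg_of_le
    (fun k => stepError_nonneg α μ _ (ht k) _ _) fun k => ?_
  have := hγ_nonneg k
  have := ht k
  unfold stepError
  gcongr
  exact hγ_le k

end StepError

section VariableMetric

variable {H : Type*} [NormedAddCommGroup H] [InnerProductSpace ℝ H]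

/-- The quadratic form `⟪V z, z⟫`: for positive `V`, the squared (semi)norm `‖z‖²_V` of the metric
with operator `V`. -/
def metricSq (V : H →ₗ[ℝ] H) (z : H) : ℝ :=
  ⟪V z, z⟫

/-- `V = U⁻¹` for a symmetric operator `U` with `α Id ≤ U ≤ μ Id` in the Loewner order. Such a `U`
rescales the forward-backward steps, which are then analysed in the metric of `V`. -/
structure IsPreconditioner (α μ : ℝ) (U V : H →ₗ[ℝ] H) : Prop where
  isSymmetric : U.IsSymmetric
  le_metricSq : ∀ z, α * ‖z‖ ^ 2 ≤ metricSq U z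
  metricSq_le : ∀ z, metricSq U z ≤ μ * ‖z‖ ^ 2
  leftInverse : Function.LeftInverse V U
  rightInverse : Function.RightInverse V U

/-- Monotonicity of a set-valued operator. -/
def IsMonotoneOperator (A : H → Set H) : Prop :=
  ∀ x y u v : H, u ∈ A x → v ∈ A y → 0 ≤ ⟪x - y, u - v⟫

/-- Cocoercivity of a single-valued operator with constant `β`. -/
def IsCocoercive (β : ℝ) (B : H → H) : Prop :=
  ∀ x y : H, β * ‖B x - B y‖ ^ 2 ≤ ⟪x - y, B x - B y⟫

/-- The explicit half-step of the forward-backward iteration, with step size `γ` and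
preconditioner `U`. -/
def forwardStep (B : H → H) (U : H →ₗ[ℝ] H) (γ : ℝ) (x : H) : H :=
  x - γ • U (B x)

/-- The implicit half-step of the forward-backward iteration, `p = (Id + γ V⁻¹ A)⁻¹ y` for
`γ ≠ 0`, written as an inclusion so that no inverse of a set-valued operator is needed. -/
def IsBackwardStep (A : H → Set H) (V : H →ₗ[ℝ] H) (γ : ℝ) (y p : H) : Prop :=
  (1 / γ) • V (y - p) ∈ A p

section Metric

variable {U V U' V' : H →ₗ[ℝ] H}

theorem metricSq_nonneg (hV : V.IsPositive) (z : H) : 0 ≤ metricSq V z :=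
  hV.inner_nonneg_left z

theorem metricSq_smul (c : ℝ) (z : H) : metricSq V (c • z) = c ^ 2 * metricSq V z := by
  simp only [metricSq, map_smul, real_inner_smul_left, real_inner_smul_right]
  ring

theorem metricSq_add (hV : V.IsSymmetric) (y z : H) :
    metricSq V (y + z) = metricSq V y + 2 * ⟪V y, z⟫ + metricSq V z := by
  simp only [metricSq, map_add, inner_add_left, inner_add_right]
  rw [hV z y, real_inner_comm z (V y)]
  ring

theorem metricSq_sub (hV : V.IsSymmetric) (y z : H) :
    metricSq V (y - z) = metricSq V y - 2 * ⟪V y, z⟫ + metricSq V z := by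
  simp only [metricSq, map_sub, inner_sub_left, inner_sub_right]
  rw [hV z y, real_inner_comm z (V y)]
  ring

theorem inner_map_sq_le_metricSq_mul_metricSq (hV : V.IsPositive) (y z : H) :
    ⟪V y, z⟫ ^ 2 ≤ metricSq V y * metricSq V z :=
  LinearMap.BilinForm.apply_sq_le_of_symm (innerₗ H ∘ₗ V) (metricSq_nonneg hV)
    ⟨fun y z => (hV.isSymmetric y z).trans (real_inner_comm _ _)⟩ y z

theorem metricSq_add_le_two_mul (hV : V.IsPositive) (y z : H) :
    metricSq V (y + z) ≤ 2 * (metricSq V y + metricSq V z) := by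
  have := metricSq_nonneg hV (y - z)
  rw [metricSq_sub hV.isSymmetric] at this
  rw [metricSq_add hV.isSymmetric]
  linarith

theorem metricSq_add_le_of_metricSq_le_sq (hV : V.IsPositive) {E : ℝ} (hE : 0 ≤ E) {e : H}
    (he : metricSq V e ≤ E ^ 2) (w : H) :
    metricSq V (w + e) ≤ (1 + E) * (metricSq V w + E) := by
  have hw := metricSq_nonneg hV w
  have cross_sq : (2 * ⟪V w, e⟫) ^ 2 ≤ (E * (1 + metricSq V w)) ^ 2 := calc
    (2 * ⟪V w, e⟫) ^ 2 = 4 * ⟪V w, e⟫ ^ 2 := by ring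
    _ ≤ 4 * (metricSq V w * E ^ 2) := by
      gcongr
      exact (inner_map_sq_le_metricSq_mul_metricSq hV w e).trans (by gcongr)
    _ = E ^ 2 * (4 * 1 * metricSq V w) := by ring
    _ ≤ E ^ 2 * (1 + metricSq V w) ^ 2 := by gcongr; exact four_mul_le_sq_add 1 _
    _ = (E * (1 + metricSq V w)) ^ 2 := by ring
  have cross := (abs_le_of_sq_le_sq' cross_sq (by positivity)).2
  rw [metricSq_add hV.isSymmetric]
  linarith

theorem metricSq_add_smul_sub_le (hV : V.IsPositive) {t : ℝ} (ht₀ : 0 ≤ t) (ht₁ : t ≤ 1)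
    (y z : H) :
    metricSq V (y + t • (z - y)) ≤ (1 - t) * metricSq V y + t * metricSq V z := by
  have defect := mul_nonneg (mul_nonneg ht₀ (sub_nonneg.2 ht₁)) (metricSq_nonneg hV (z - y))
  have hz : metricSq V z = metricSq V y + 2 * ⟪V y, z - y⟫ + metricSq V (z - y) := by
    rw [← metricSq_add hV.isSymmetric, add_sub_cancel]
  rw [metricSq_add hV.isSymmetric, metricSq_smul, real_inner_smul_right]
  linear_combination defect - t * hz

theorem isSymmetric_of_rightInverse (hU : U.IsSymmetric) (hUV : Function.RightInverse V U) :
    V.IsSymmetric := fun y z => by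
  rw [← hUV z, ← hU, hUV, hUV]

theorem isPositive_of_rightInverse (hU : U.IsPositive) (hUV : Function.RightInverse V U) :
    V.IsPositive :=
  (LinearMap.isPositive_iff V).2 ⟨isSymmetric_of_rightInverse hU.isSymmetric hUV,
    fun z => by simpa only [hUV z] using hU.inner_nonneg_right (V z)⟩

theorem metricSq_rightInverse_le (hU : U.IsPositive) (hUV : Function.RightInverse V U)
    (hUV' : Function.RightInverse V' U') {c : ℝ} (hc : 0 ≤ c)
    (hUU' : ∀ z, metricSq U z ≤ c * metricSq U' z) (z : H) :
    metricSq V' z ≤ c * metricSq V z := by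
  have hV := mul_nonneg hc (metricSq_nonneg (isPositive_of_rightInverse hU hUV) z)
  have sq_le : metricSq V' z ^ 2 ≤ metricSq V' z * (c * metricSq V z) := calc
    metricSq V' z ^ 2 = ⟪U (V' z), V z⟫ ^ 2 := by rw [hU.isSymmetric, hUV, metricSq]
    _ ≤ metricSq U (V' z) * metricSq U (V z) := inner_map_sq_le_metricSq_mul_metricSq hU _ _
    _ ≤ c * metricSq U' (V' z) * metricSq U (V z) := by
      gcongr
      · exact metricSq_nonneg hU _
      · exact hUU' _
    _ = metricSq V' z * (c * metricSq V z) := by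
      simp only [metricSq, hUV z, hUV' z, real_inner_comm z]
      ring
  by_contra! hlt
  nlinarith

end Metric

namespace IsPreconditioner

variable {α μ : ℝ} {U V : H →ₗ[ℝ] H}

theorem isPositive (h : IsPreconditioner α μ U V) (hα : 0 ≤ α) : U.IsPositive :=
  (LinearMap.isPositive_iff U).2
    ⟨h.isSymmetric, fun z => le_trans (by positivity) (h.le_metricSq z)⟩

theorem isPositive_inverse (h : IsPreconditioner α μ U V) (hα : 0 ≤ α) : V.IsPositive :=
  isPositive_of_rightInverse (h.isPositive hα) h.rightInverse

theorem metricSq_inverse_le (h : IsPreconditioner α μ U V) (hα : 0 < α) (z : H) :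
    metricSq V z ≤ α⁻¹ * ‖z‖ ^ 2 := by
  have hid (y : H) : metricSq LinearMap.id y = ‖y‖ ^ 2 := real_inner_self_eq_norm_sq y
  rw [← hid z]
  refine metricSq_rightInverse_le (V := LinearMap.id) LinearMap.isPositive_id (fun _ => rfl)
    h.rightInverse (inv_nonneg.2 hα.le) (fun y => ?_) z
  rw [hid, le_inv_mul_iff₀ hα]
  exact h.le_metricSq y

theorem metricSq_inverse_map_le (h : IsPreconditioner α μ U V) (z : H) :
    metricSq V (U z) ≤ μ * ‖z‖ ^ 2 := by
  rw [metricSq, h.leftInverse, real_inner_comm]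
  exact h.metricSq_le z

end IsPreconditioner

section ForwardBackward

variable {α β γ μ : ℝ} {A : H → Set H} {B : H → H} {U V : H →ₗ[ℝ] H}

theorem metricSq_forwardStep_sub_le (hUV : IsPreconditioner α μ U V)
    (hB : IsCocoercive β B) (hγ : 0 ≤ γ) (x y : H) :
    metricSq V (forwardStep B U γ x - forwardStep B U γ y) ≤
      metricSq V (x - y) - γ * (2 * β - γ * μ) * ‖B x - B y‖ ^ 2 := by
  have hV := isSymmetric_of_rightInverse hUV.isSymmetric hUV.rightInverse
  have step_sub : forwardStep B U γ x - forwardStep B U γ y =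
      (x - y) - γ • U (B x - B y) := by
    simp only [forwardStep, map_sub]
    module
  have cross : ⟪V (x - y), γ • U (B x - B y)⟫ = γ * ⟪x - y, B x - B y⟫ := by
    rw [real_inner_smul_right, hV, hUV.leftInverse]
  have cocoercive := mul_le_mul_of_nonneg_left (hB x y) hγ
  have bounded := mul_le_mul_of_nonneg_left (hUV.metricSq_inverse_map_le (B x - B y)) (sq_nonneg γ)
  rw [step_sub, metricSq_sub hV, cross, metricSq_smul]
  linarith

theorem metricSq_sub_le_of_isBackwardStep (hV : V.IsPositive) (hA : IsMonotoneOperator A)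
    (hγ : 0 < γ) {y y' p p' : H} (hp : IsBackwardStep A V γ y p)
    (hp' : IsBackwardStep A V γ y' p') :
    metricSq V (p - p') ≤ metricSq V (y - y') := by
  have monotone : 0 ≤ ⟪V ((y - y') - (p - p')), p - p'⟫ := by
    have h := hA _ _ _ _ hp hp'
    rw [← smul_sub, ← map_sub, real_inner_smul_right, real_inner_comm, sub_sub_sub_comm] at h
    exact nonneg_of_mul_nonneg_right h (one_div_pos.2 hγ)
  have split : metricSq V (p - p') = ⟪V (y - y'), p - p'⟫ - ⟪V ((y - y') - (p - p')), p - p'⟫ := by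
    rw [map_sub V (y - y'), inner_sub_left, metricSq]
    ring
  have residual := metricSq_nonneg hV ((y - y') - (p - p'))
  rw [metricSq_sub hV.isSymmetric] at residual
  linarith

theorem isBackwardStep_forwardStep_self (hVU : Function.LeftInverse V U) (hγ : γ ≠ 0) {z : H}
    (hz : ∃ u ∈ A z, u + B z = 0) : IsBackwardStep A V γ (forwardStep B U γ z) z := by
  obtain ⟨u, hu, huB⟩ := hz
  have : (1 / γ) • V (forwardStep B U γ z - z) = u := by
    rw [eq_neg_of_add_eq_zero_left huB, forwardStep, sub_sub_cancel_left, map_neg, map_smul, hVU,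
      smul_neg, smul_smul, one_div_mul_cancel hγ, one_smul]
  rwa [IsBackwardStep, this]

theorem metricSq_forwardBackward_sub_le (hα : 0 ≤ α) (hUV : IsPreconditioner α μ U V)
    (hA : IsMonotoneOperator A) (hB : IsCocoercive β B) (hγ : 0 < γ) {x q z : H}
    (hq : IsBackwardStep A V γ (forwardStep B U γ x) q) (hz : ∃ u ∈ A z, u + B z = 0) :
    metricSq V (q - z) ≤ metricSq V (x - z) - γ * (2 * β - γ * μ) * ‖B x - B z‖ ^ 2 :=
  (metricSq_sub_le_of_isBackwardStep (hUV.isPositive_inverse hα) hA hγ hq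
    (isBackwardStep_forwardStep_self hUV.leftInverse hγ.ne' hz)).trans
    (metricSq_forwardStep_sub_le hUV hB hγ.le x z)

theorem metricSq_backwardStep_error_le (hα : 0 < α) (hμ : 0 ≤ μ) (hUV : IsPreconditioner α μ U V)
    (hA : IsMonotoneOperator A) (hγ : 0 < γ) {a b y p q : H}
    (hp : IsBackwardStep A V γ (y - γ • U b) p) (hq : IsBackwardStep A V γ y q) :
    metricSq V (p - q + a) ≤ 2 * (γ ^ 2 * μ + α⁻¹) * (‖a‖ + ‖b‖) ^ 2 := by
  have hV := hUV.isPositive_inverse hα.le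
  have forward_error : metricSq V (p - q) ≤ γ ^ 2 * (μ * ‖b‖ ^ 2) := calc
    metricSq V (p - q) ≤ metricSq V (y - γ • U b - y) :=
      metricSq_sub_le_of_isBackwardStep hV hA hγ hp hq
    _ = γ ^ 2 * metricSq V (U b) := by
      rw [sub_sub_cancel_left, ← neg_smul, metricSq_smul, neg_sq]
    _ ≤ γ ^ 2 * (μ * ‖b‖ ^ 2) := by gcongr; exact hUV.metricSq_inverse_map_le b
  calc
    metricSq V (p - q + a) ≤ 2 * (metricSq V (p - q) + metricSq V a) :=
      metricSq_add_le_two_mul hV _ _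
    _ ≤ 2 * (γ ^ 2 * (μ * ‖b‖ ^ 2) + α⁻¹ * ‖a‖ ^ 2) := by
      gcongr
      exact hUV.metricSq_inverse_le hα a
    _ ≤ 2 * (γ ^ 2 * (μ * (‖a‖ + ‖b‖) ^ 2) + α⁻¹ * (‖a‖ + ‖b‖) ^ 2) := by
      gcongr
      · exact le_add_of_nonneg_left (norm_nonneg a)
      · exact le_add_of_nonneg_right (norm_nonneg b)
    _ = 2 * (γ ^ 2 * μ + α⁻¹) * (‖a‖ + ‖b‖) ^ 2 := by ring

theorem metricSq_relaxed_forwardBackward_sub_le (hα : 0 < α) (hμ : 0 ≤ μ)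
    (hUV : IsPreconditioner α μ U V) (hA : IsMonotoneOperator A) (hB : IsCocoercive β B)
    (hγ : 0 < γ) {t : ℝ} (ht₀ : 0 ≤ t) (ht₁ : t ≤ 1) {a b x p q z : H}
    (hp : IsBackwardStep A V γ (x - γ • U (B x + b)) p)
    (hq : IsBackwardStep A V γ (forwardStep B U γ x) q) (hz : ∃ u ∈ A z, u + B z = 0) :
    metricSq V (x + t • (p + a - x) - z) ≤ (1 + stepError α μ γ t a b) *
      (metricSq V (x - z) + stepError α μ γ t a b -
        t * (γ * (2 * β - γ * μ)) * ‖B x - B z‖ ^ 2) := by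
  have hV := hUV.isPositive_inverse hα.le
  have stepError_nonneg := stepError_nonneg α μ γ ht₀ a b
  have hp' : IsBackwardStep A V γ (forwardStep B U γ x - γ • U b) p := by
    rwa [forwardStep, sub_sub, ← smul_add, ← map_add]
  have error : metricSq V (t • (p - q + a)) ≤ stepError α μ γ t a b ^ 2 := calc
    metricSq V (t • (p - q + a)) = t ^ 2 * metricSq V (p - q + a) := metricSq_smul _ _
    _ ≤ t ^ 2 * (2 * (γ ^ 2 * μ + α⁻¹) * (‖a‖ + ‖b‖) ^ 2) := by
      gcongr
      exact metricSq_backwardStep_error_le hα hμ hUV hA hγ hp' hq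
    _ = stepError α μ γ t a b ^ 2 := by
      rw [stepError, mul_pow, Real.sq_sqrt (by positivity)]
      ring
  have exact_step : metricSq V ((x - z) + t • ((q - z) - (x - z))) ≤
      metricSq V (x - z) - t * (γ * (2 * β - γ * μ)) * ‖B x - B z‖ ^ 2 := by
    have descent := mul_le_mul_of_nonneg_left
      (metricSq_forwardBackward_sub_le hα.le hUV hA hB hγ hq hz) ht₀
    linarith [metricSq_add_smul_sub_le hV ht₀ ht₁ (x - z) (q - z)]
  calc
    metricSq V (x + t • (p + a - x) - z) =
        metricSq V ((x - z) + t • ((q - z) - (x - z)) + t • (p - q + a)) := by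
      congr 1
      module
    _ ≤ (1 + stepError α μ γ t a b) *
        (metricSq V ((x - z) + t • ((q - z) - (x - z))) + stepError α μ γ t a b) :=
      metricSq_add_le_of_metricSq_le_sq hV stepError_nonneg error _
    _ ≤ _ := by
      gcongr
      linarith

theorem metricSq_variableMetric_forwardBackward_sub_le (hα : 0 < α) (hμ : 0 ≤ μ)
    (hUV : IsPreconditioner α μ U V) {U' V' : H →ₗ[ℝ] H} (hUV' : Function.RightInverse V' U')
    {η : ℝ} (hη : 0 ≤ η) (hUU' : ∀ z, metricSq U z ≤ (1 + η) * metricSq U' z)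
    (hA : IsMonotoneOperator A) (hB : IsCocoercive β B)
    (hγ : 0 < γ) {t : ℝ} (ht₀ : 0 ≤ t) (ht₁ : t ≤ 1) {a b x p q z : H}
    (hp : IsBackwardStep A V γ (x - γ • U (B x + b)) p)
    (hq : IsBackwardStep A V γ (forwardStep B U γ x) q) (hz : ∃ u ∈ A z, u + B z = 0) :
    metricSq V' (x + t • (p + a - x) - z) ≤ Real.exp (η + stepError α μ γ t a b) *
      (metricSq V (x - z) + stepError α μ γ t a b -
        t * (γ * (2 * β - γ * μ)) * ‖B x - B z‖ ^ 2) := by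
  have change_metric := metricSq_rightInverse_le (hUV.isPositive hα.le) hUV.rightInverse hUV'
    (add_nonneg zero_le_one hη) hUU' (x + t • (p + a - x) - z)
  have step := metricSq_relaxed_forwardBackward_sub_le hα hμ hUV hA hB hγ ht₀ ht₁ (a := a) hp hq hz
  have hE := stepError_nonneg α μ γ ht₀ a b
  have bound_nonneg := nonneg_of_mul_nonneg_right
    ((metricSq_nonneg (hUV.isPositive_inverse hα.le) _).trans step) (by positivity)
  refine (change_metric.trans (mul_le_mul_of_nonneg_left step (by positivity))).trans ?_
  rw [← mul_assoc, Real.exp_add, add_comm 1, add_comm 1]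
  gcongr <;> exact Real.add_one_le_exp _

end ForwardBackward

section Iteration

variable {α β μ G : ℝ} {A : H → Set H} {B : H → H} {U V : ℕ → H →ₗ[ℝ] H}
  {η γ lam : ℕ → ℝ} {a b x : ℕ → H} {J : ℕ → H → H} {z : H}

theorem summable_relaxation_mul_stepSize_mul_norm_sq (hB : IsCocoercive β B)
    (hA : IsMonotoneOperator A) (hz : ∃ u ∈ A z, u + B z = 0) (hα : 0 < α) (hμ : 0 ≤ μ)
    (hUV : ∀ k, IsPreconditioner α μ (U k) (V k))
    (hη_nonneg : ∀ k, 0 ≤ η k) (hη : Summable η)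
    (hU : ∀ k z, metricSq (U k) z ≤ (1 + η k) * metricSq (U (k + 1)) z)
    (hγ_pos : ∀ k, 0 < γ k) (hγ_le : ∀ k, γ k ≤ G) (hγμ : ∀ k, γ k * μ ≤ 2 * β)
    (hlam_nonneg : ∀ k, 0 ≤ lam k) (hlam_le : ∀ k, lam k ≤ 1)
    (ha : Summable fun k => lam k * ‖a k‖) (hb : Summable fun k => lam k * ‖b k‖)
    (hJ : ∀ k y, IsBackwardStep A (V k) (γ k) y (J k y))
    (hx : ∀ k, x (k + 1) =
      x k + lam k • (J k (x k - γ k • U k (B (x k) + b k)) + a k - x k)) :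
    Summable fun k => lam k * (γ k * (2 * β - γ k * μ)) * ‖B (x k) - B z‖ ^ 2 := by
  have hE_nonneg (k : ℕ) : 0 ≤ stepError α μ (γ k) (lam k) (a k) (b k) :=
    stepError_nonneg _ _ _ (hlam_nonneg k) _ _
  have hE : Summable fun k => stepError α μ (γ k) (lam k) (a k) (b k) :=
    summable_stepError hμ (fun k => (hγ_pos k).le) hγ_le hlam_nonneg ha hb
  refine summable_of_le_exp_mul (Q := fun k => metricSq (V k) (x k - z))
    (fun k => metricSq_nonneg ((hUV k).isPositive_inverse hα.le) _) (fun k => ?_)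
    (fun k => add_nonneg (hη_nonneg k) (hE_nonneg k)) (hη.add hE) hE_nonneg hE fun k => ?_
  · have := mul_nonneg (hlam_nonneg k) (mul_nonneg (hγ_pos k).le (sub_nonneg.2 (hγμ k)))
    positivity
  · rw [hx k]
    exact metricSq_variableMetric_forwardBackward_sub_le hα hμ (hUV k) (hUV (k + 1)).rightInverse
      (hη_nonneg k) (hU k) hA hB (hγ_pos k) (hlam_nonneg k) (hlam_le k) (hJ k _) (hJ k _) hz

theorem fb_B_square_summable_general (hB : IsCocoercive β B)
    (hA : IsMonotoneOperator A) (hz : ∃ u ∈ A z, u + B z = 0) (hα : 0 < α) (hμ : 0 < μ)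
    (hUV : ∀ k, IsPreconditioner α μ (U k) (V k))
    (hη_nonneg : ∀ k, 0 ≤ η k) (hη : Summable η)
    (hU : ∀ k z, metricSq (U k) z ≤ (1 + η k) * metricSq (U (k + 1)) z)
    {lamlb γlb ε : ℝ} (hlamlb : 0 < lamlb) (hlam : ∀ k, lamlb ≤ lam k ∧ lam k ≤ 1)
    (hγlb : 0 < γlb) (hγ_ge : ∀ k, γlb ≤ γ k) (hε : 0 < ε) (hγ_le : ∀ k, γ k ≤ (2 * β - ε) / μ)
    (ha : Summable fun k => lam k * ‖a k‖) (hb : Summable fun k => lam k * ‖b k‖)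
    (hJ : ∀ k y, IsBackwardStep A (V k) (γ k) y (J k y))
    (hx : ∀ k, x (k + 1) =
      x k + lam k • (J k (x k - γ k • U k (B (x k) + b k)) + a k - x k)) :
    Summable fun k => ‖B (x k) - B z‖ ^ 2 := by
  have hγ_pos (k : ℕ) : 0 < γ k := hγlb.trans_le (hγ_ge k)
  have hlam_nonneg (k : ℕ) : 0 ≤ lam k := hlamlb.le.trans (hlam k).1
  have hγμ (k : ℕ) : γ k * μ ≤ 2 * β - ε := (le_div_iff₀ hμ).1 (hγ_le k)
  have weighted := summable_relaxation_mul_stepSize_mul_norm_sq hB hA hz hα hμ.le hUV hη_nonneg hη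
    hU hγ_pos hγ_le (fun k => (hγμ k).trans (sub_le_self _ hε.le)) hlam_nonneg
    (fun k => (hlam k).2) ha hb hJ hx
  refine (weighted.mul_left (lamlb * (γlb * ε))⁻¹).of_nonneg_of_le
    (fun k => sq_nonneg _) fun k => ?_
  rw [le_inv_mul_iff₀ (by positivity)]
  have := hγ_pos k
  have := hlam_nonneg k
  gcongr
  · exact (hlam k).1
  · exact hγ_ge k
  · linarith [hγμ k]

end Iteration

theorem inner_map_self_le_of_opNorm_le {U : H →L[ℝ] H} {μ : ℝ} (hU : ‖U‖ ≤ μ) (z : H) :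
    ⟪U z, z⟫ ≤ μ * ‖z‖ ^ 2 := calc
  ⟪U z, z⟫ ≤ ‖U z‖ * ‖z‖ := real_inner_le_norm _ _
  _ ≤ μ * ‖z‖ * ‖z‖ := by gcongr; exact U.le_of_opNorm_le hU z
  _ = μ * ‖z‖ ^ 2 := by ring

end VariableMetric

theorem fb_B_square_summable
    {H : Type*} [NormedAddCommGroup H] [InnerProductSpace ℝ H] [CompleteSpace H]
    (β : ℝ) (hβ : 0 < β) (B : H → H)
    (hB : ∀ x y : H, ⟪x - y, B x - B y⟫ ≥ β * ‖B x - B y‖ ^ 2)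
    (A : H → Set H)
    (hAmono : ∀ x y u v : H, u ∈ A x → v ∈ A y → ⟪x - y, u - v⟫ ≥ 0)
    (hAmax : ∀ z w : H, (∀ x : H, ∀ u ∈ A x, ⟪x - z, u - w⟫ ≥ 0) → w ∈ A z)
    (hΩ : {z : H | ∃ u ∈ A z, u + B z = 0}.Nonempty)
    (α : ℝ) (hα : 0 < α) (μ : ℝ) (hμ : 0 < μ)
    (U V : ℕ → H →L[ℝ] H)
    (hU : ∀ k, IsSelfAdjoint (U k))
    (hUpos : ∀ k, ∀ x : H, ⟪U k x, x⟫ ≥ α * ‖x‖ ^ 2)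
    (hV : ∀ k, IsSelfAdjoint (V k))
    (hVU : ∀ k, (V k).comp (U k) = ContinuousLinearMap.id ℝ H)
    (hUV : ∀ k, (U k).comp (V k) = ContinuousLinearMap.id ℝ H)
    (hUnorm : ∀ k, ‖U k‖ ≤ μ)
    (η : ℕ → ℝ) (hη0 : ∀ k, 0 ≤ η k) (hηsum : Summable η)
    (hUmono : ∀ k, ∀ z : H, (1 + η k) * ⟪U (k + 1) z, z⟫ ≥ ⟪U k z, z⟫)
    (γ lam αk : ℕ → ℝ)
    (hγ : ∀ k, 0 < γ k ∧ γ k < 2 * β / ‖U k‖)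
    (hαk : ∀ k, αk k = 2 * β / (4 * β - γ k * ‖U k‖))
    (hlam : ∀ k, 0 < lam k ∧ lam k < 1 / αk k)
    (a b : ℕ → H)
    (ha : Summable (fun k => lam k * ‖a k‖))
    (hb : Summable (fun k => lam k * ‖b k‖))
    (J : ℕ → H → H)
    (hJ : ∀ k, ∀ y : H, (1 / γ k) • (V k (y - J k y)) ∈ A (J k y))
    (x : ℕ → H)
    (hx : ∀ k, x (k + 1) =
      x k + lam k • (J k (x k - γ k • U k (B (x k) + b k)) + a k - x k))
    (lamlb : ℝ) (hlamlb : 0 < lamlb)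
    (hlam' : ∀ k, lamlb ≤ lam k ∧ lam k ≤ 1)
    (γlb : ℝ) (hγlb : 0 < γlb) (hγ' : ∀ k, γlb ≤ γ k)
    (ε : ℝ) (hε : 0 < ε ∧ ε < 2 * β - μ * γlb)
    (hγub : ∀ k, γ k ≤ (2 * β - ε) / μ) :
    ∀ xs ∈ {z : H | ∃ u ∈ A z, u + B z = 0},
      Summable (fun k => ‖B (x k) - B xs‖ ^ 2) := by
  intro xs hxs
  have hUV' (k : ℕ) : IsPreconditioner α μ (U k : H →ₗ[ℝ] H) (V k : H →ₗ[ℝ] H) :=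
    ⟨(hU k).isSymmetric, hUpos k, inner_map_self_le_of_opNorm_le (hUnorm k),
      DFunLike.congr_fun (hVU k), DFunLike.congr_fun (hUV k)⟩
  exact fb_B_square_summable_general hB hAmono hxs hα hμ hUV' hη0 hηsum hUmono hlamlb hlam' hγlb hγ'
    hε.1 hγub ha hb hJ hx
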